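/- Let P be a dcpo. Then P^∨ is a dcpo under inclusion: for every nonempty directed family 𝒟 ⊆ P^∨, the Scott closure of ⋃𝒟 in P is itself a ⋁-existing Scott closed subset of P, and it is the least upper bound of 𝒟 in P^∨. -/

import Mathlib

/-!
For a Scott continuous `f : P → L` and `u : L`, the set `{x | f x ≤ u}` is Scott closed. Hence
`f '' A` and `f '' scottClosure A` have the same upper bounds
(`upperBounds_image_scottClosure`), and `A` is ⋁-existing as soon as its Scott closure is, and
conversely. For a directed family `𝒟` in `P^∨`, the suprema of the sets `f '' C`, `C ∈ 𝒟`, form a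
directed subset of `L`; its supremum is the supremum of `f '' ⋃ 𝒟` (`supExisting_biUnion`), so
`scottClosure (⋃ 𝒟)` is a member of `P^∨`. It is the least one above `𝒟` because every member of
`P^∨` is Scott closed.
-/

universe u v

/-- A *dcpo*: a partial order in which every nonempty directed subset has a least upper bound. -/
def IsDcpo (P : Type*) [PartialOrder P] : Prop :=
  ∀ d : Set P, d.Nonempty → DirectedOn (· ≤ ·) d → ∃ a, IsLUB d a

/-- A *dcpo-∨↑-semilattice*: a dcpo in which every consistent pair of elements
(i.e. pair with an upper bound) has a least upper bound. -/
def IsDcpoVSemilattice (L : Type*) [PartialOrder L] : Prop :=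
  IsDcpo L ∧ ∀ x y : L, BddAbove ({x, y} : Set L) → ∃ a, IsLUB ({x, y} : Set L) a

/-- Scott continuity: `f` maps least upper bounds of nonempty directed sets to
least upper bounds of the images. -/
def IsScottContinuous {P : Type*} {L : Type*} [PartialOrder P] [PartialOrder L]
    (f : P → L) : Prop :=
  ∀ d : Set P, d.Nonempty → DirectedOn (· ≤ ·) d → ∀ a, IsLUB d a → IsLUB (f '' d) (f a)

/-- A *Scott closed* set: a lower set closed under least upper bounds of its
nonempty directed subsets. -/
def IsScottClosed {P : Type*} [PartialOrder P] (A : Set P) : Prop :=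
  IsLowerSet A ∧ ∀ d : Set P, d ⊆ A → d.Nonempty → DirectedOn (· ≤ ·) d →
    ∀ a, IsLUB d a → a ∈ A

/-- The Scott closure of a set: the smallest Scott closed set containing it. -/
def scottClosure {P : Type*} [PartialOrder P] (A : Set P) : Set P :=
  ⋂₀ {C | IsScottClosed C ∧ A ⊆ C}

/-- A subset `A` of a dcpo `P` is *⋁-existing* if for every Scott continuous map `f`
into an arbitrary dcpo-∨↑-semilattice `L`, the supremum of `f '' A` exists in `L`. -/
def SupExisting {P : Type u} [PartialOrder P] (A : Set P) : Prop :=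
  ∀ (L : Type v) [PartialOrder L], IsDcpoVSemilattice L →
    ∀ f : P → L, IsScottContinuous f → ∃ a, IsLUB (f '' A) a

/-- An *F-Scott closed* set: a Scott closed set containing the least upper bound of
each of its nonempty finite consistent subsets. -/
def IsFScottClosed {L : Type*} [PartialOrder L] (A : Set L) : Prop :=
  IsScottClosed A ∧ ∀ F : Set L, F ⊆ A → F.Nonempty → F.Finite → BddAbove F →
    ∀ a, IsLUB F a → a ∈ A

/-- The F-Scott closure of a set: the intersection of all F-Scott closed sets containing it. -/
def fScottClosure {L : Type*} [PartialOrder L] (A : Set L) : Set L :=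
  ⋂₀ {C | IsFScottClosed C ∧ A ⊆ C}

/-- A *dcpo-∨↑-semilattice homomorphism*: maps least upper bounds of nonempty directed
sets and of consistent pairs to the least upper bounds of the images. -/
def IsSemilatticeHom {L : Type*} {M : Type*} [PartialOrder L] [PartialOrder M]
    (f : L → M) : Prop :=
  (∀ d : Set L, d.Nonempty → DirectedOn (· ≤ ·) d → ∀ a, IsLUB d a → IsLUB (f '' d) (f a)) ∧
  (∀ x y : L, BddAbove ({x, y} : Set L) → ∀ a, IsLUB ({x, y} : Set L) a →
    IsLUB (f '' ({x, y} : Set L)) (f a))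

/-- A subset `A` of a dcpo-∨↑-semilattice `L` is *F-⋁-existing* if for every
dcpo-∨↑-semilattice homomorphism `f` into an arbitrary dcpo-∨↑-semilattice `M`,
the supremum of `f '' A` exists in `M`. -/
def FSupExisting {L : Type u} [PartialOrder L] (A : Set L) : Prop :=
  ∀ (M : Type v) [PartialOrder M], IsDcpoVSemilattice M →
    ∀ f : L → M, IsSemilatticeHom f → ∃ a, IsLUB (f '' A) a

/-- `P^∨`: the family of all ⋁-existing Scott closed subsets of `P`, ordered by inclusion. -/
abbrev Pvee (P : Type u) [PartialOrder P] : Type u :=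
  {A : Set P // IsScottClosed A ∧ SupExisting.{u, u} A}

theorem isScottClosed_principal {P : Type u} [PartialOrder P] (x : P) :
    IsScottClosed (Set.Iic x) := by
  constructor
  · intro a b hba ha
    exact le_trans hba ha
  · intro d hd _ _ a ha
    exact ha.2 fun y hy => hd hy

theorem supExisting_principal {P : Type u} [PartialOrder P] (x : P) :
    SupExisting.{u, v} (Set.Iic x) := by
  intro L _ _ f hf
  have hdir : DirectedOn (· ≤ ·) (Set.Iic x) := by
    intro a ha b hb
    exact ⟨x, le_refl x, ha, hb⟩
  exact ⟨f x, hf (Set.Iic x) ⟨x, Set.mem_Iic.2 (le_refl x)⟩ hdir x isLUB_Iic⟩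

/-- The embedding `j` of `P` into `P^∨`, sending `x` to the principal ideal `↓x`. -/
def jmap {P : Type u} [PartialOrder P] (x : P) : Pvee P :=
  ⟨Set.Iic x, isScottClosed_principal x, supExisting_principal.{u, u} x⟩

theorem IsScottContinuous.monotone {P : Type*} {L : Type*} [PartialOrder P] [PartialOrder L]
    {f : P → L} (hf : IsScottContinuous f) : Monotone f := by
  intro x y hxy
  have hlub : IsLUB ({x, y} : Set P) y := by
    refine ⟨?_, fun b hb => hb (by simp)⟩
    rintro z (rfl | rfl)
    exacts [hxy, le_rfl]
  have hdir : DirectedOn (· ≤ ·) ({x, y} : Set P) := fun a ha b hb =>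
    ⟨y, by simp, hlub.1 ha, hlub.1 hb⟩
  exact (hf _ ⟨x, by simp⟩ hdir y hlub).1 ⟨x, by simp, rfl⟩

theorem IsScottContinuous.isScottClosed_le {P : Type*} {L : Type*} [PartialOrder P]
    [PartialOrder L] {f : P → L} (hf : IsScottContinuous f) (u : L) :
    IsScottClosed {x | f x ≤ u} := by
  refine ⟨fun a b hba ha => (hf.monotone hba).trans ha, fun d hd hne hdir a ha => ?_⟩
  exact (hf d hne hdir a ha).2 (Set.forall_mem_image.2 fun x hx => hd hx)

theorem subset_scottClosure {P : Type*} [PartialOrder P] (A : Set P) : A ⊆ scottClosure A :=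
  fun _ hx _ hC => hC.2 hx

theorem scottClosure_subset {P : Type*} [PartialOrder P] {A C : Set P}
    (hC : IsScottClosed C) (h : A ⊆ C) : scottClosure A ⊆ C :=
  Set.sInter_subset_of_mem ⟨hC, h⟩

theorem isScottClosed_scottClosure {P : Type*} [PartialOrder P] (A : Set P) :
    IsScottClosed (scottClosure A) :=
  ⟨fun _ _ hba ha C hC => hC.1.1 hba (ha C hC),
    fun d hd hne hdir a ha C hC => hC.1.2 d (fun _ hx => hd hx C hC) hne hdir a ha⟩

theorem upperBounds_image_scottClosure {P : Type*} {L : Type*} [PartialOrder P] [PartialOrder L]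
    {f : P → L} (hf : IsScottContinuous f) (A : Set P) :
    upperBounds (f '' scottClosure A) = upperBounds (f '' A) := by
  refine (upperBounds_mono_set (Set.image_mono (subset_scottClosure A))).antisymm ?_
  intro u hu
  exact Set.forall_mem_image.2 fun x hx =>
    scottClosure_subset (hf.isScottClosed_le u) (fun a ha => hu ⟨a, ha, rfl⟩) hx

theorem SupExisting.scottClosure {P : Type u} [PartialOrder P] {A : Set P}
    (hA : SupExisting.{u, v} A) : SupExisting.{u, v} (scottClosure A) := by
  intro L _ hL f hf
  obtain ⟨a, ha⟩ := hA L hL f hf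
  refine ⟨a, ?_⟩
  rwa [IsLUB, upperBounds_image_scottClosure hf]

/-- A directed union of ⋁-existing Scott closed sets is ⋁-existing: the suprema of the images of
the members form a directed set. -/
theorem supExisting_biUnion {P : Type u} [PartialOrder P] {𝒟 : Set (Pvee P)}
    (hne : 𝒟.Nonempty) (hdir : DirectedOn (· ≤ ·) 𝒟) :
    SupExisting.{u, u} (⋃ C ∈ 𝒟, C.1) := by
  intro L _ hL f hf
  choose g hg using fun C : Pvee P => C.2.2 L hL f hf
  have hmono : Monotone g := fun C D hCD => isLUB_le_iff (hg C) |>.2 <|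
    upperBounds_mono_set (Set.image_mono hCD) (hg D).1
  have hgdir : DirectedOn (· ≤ ·) (g '' 𝒟) := by
    rintro _ ⟨C, hC, rfl⟩ _ ⟨D, hD, rfl⟩
    obtain ⟨E, hE, hCE, hDE⟩ := hdir C hC D hD
    exact ⟨g E, ⟨E, hE, rfl⟩, hmono hCE, hmono hDE⟩
  obtain ⟨a, ha⟩ := hL.1 (g '' 𝒟) (hne.image g) hgdir
  refine ⟨a, ?_, fun u hu => ha.2 ?_⟩
  · rintro _ ⟨x, hx, rfl⟩
    obtain ⟨C, hC, hxC⟩ := Set.mem_iUnion₂.1 hx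
    exact ((hg C).1 ⟨x, hxC, rfl⟩).trans (ha.1 ⟨C, hC, rfl⟩)
  · rintro _ ⟨C, hC, rfl⟩
    refine (hg C).2 (Set.forall_mem_image.2 fun x hx => hu ⟨x, ?_, rfl⟩)
    exact Set.mem_iUnion₂.2 ⟨C, hC, hx⟩

/-- `P^∨` is a dcpo under inclusion: the least upper bound of a nonempty
directed family `𝒟 ⊆ P^∨` is the Scott closure in `P` of `⋃ 𝒟`, which is itself a
⋁-existing Scott closed subset of `P`. -/
theorem pvee_isDcpo {P : Type u} [PartialOrder P] (hP : IsDcpo P) :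
    IsDcpo (Pvee P) ∧
      ∀ 𝒟 : Set (Pvee P), 𝒟.Nonempty → DirectedOn (· ≤ ·) 𝒟 →
        ∃ S : Pvee P, S.1 = scottClosure (⋃ C ∈ 𝒟, C.1) ∧ IsLUB 𝒟 S := by
  have key : ∀ 𝒟 : Set (Pvee P), 𝒟.Nonempty → DirectedOn (· ≤ ·) 𝒟 →
      ∃ S : Pvee P, S.1 = scottClosure (⋃ C ∈ 𝒟, C.1) ∧ IsLUB 𝒟 S := by
    intro 𝒟 hne hdir
    refine ⟨⟨scottClosure (⋃ C ∈ 𝒟, C.1), isScottClosed_scottClosure _,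
      (supExisting_biUnion hne hdir).scottClosure⟩, rfl, fun C hC => ?_, fun T hT => ?_⟩
    · exact (Set.subset_biUnion_of_mem (u := fun C : Pvee P => C.1) hC).trans
        (subset_scottClosure _)
    · exact scottClosure_subset T.2.1 (Set.iUnion₂_subset fun C hC => hT hC)
  refine ⟨fun 𝒟 hne hdir => ?_, key⟩
  obtain ⟨S, -, hS⟩ := key 𝒟 hne hdir
  exact ⟨S, hS⟩
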